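/- Let T denote the set of n×n lower triangular real matrices. Let L̄ ∈ T and b̄ ∈ ℝⁿ with ‖L̄‖_max ≤ 1 and ‖b̄‖_∞ ≤ 1, σ > 0, and let L ~ N_T(L̄, σ²Id) and b ~ N(b̄, σ²Id) be independent. Then for every β > 1, E( log_β(c(L,b)) ) ≤ log_β((1 + σ)/σ) + 5·log_β n + 2.65/ln β, where c(L,b) = max_{k ∈ [n]} c_k(L,b) and c_k(L,b) is the componentwise condition number of the map (L,b) ↦ (L⁻¹b)_k at (L,b) (L is almost surely invertible). -/

import Mathlib

open MeasureTheory ProbabilityTheory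
open scoped ENNReal

/-- Componentwise "distance" `d(u,v) = ‖(u−v)/v‖_∞`, valued in `[0,∞]`:
the `i`-th component of the quotient is `|u i − v i|/|v i|` if `v i ≠ 0`,
`0` if `u i = v i = 0`, and `∞` otherwise. -/
noncomputable def cwDist {ι : Type*} (u v : ι → ℝ) : ℝ≥0∞ :=
  ⨆ i, if v i ≠ 0 then ENNReal.ofReal (|u i - v i| / |v i|)
       else if u i = v i then 0 else ⊤

/-- Componentwise condition number of `F : D ⊆ ℝ^ι → ℝ^κ` at `a`:
`c^F(a) = lim_{δ→0} sup { d(F x, F a)/d(x,a) : x ∈ D, d(x,a) ≤ δ, x ≠ a }`,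
the limit being an infimum since the sup is monotone in `δ`. -/
noncomputable def cwCond {ι κ : Type*} (D : Set (ι → ℝ)) (F : (ι → ℝ) → κ → ℝ)
    (a : ι → ℝ) : ℝ≥0∞ :=
  ⨅ δ ∈ Set.Ioi (0 : ℝ≥0∞),
    ⨆ x ∈ {x ∈ D | cwDist x a ≤ δ ∧ x ≠ a}, cwDist (F x) (F a) / cwDist x a

/-- A matrix viewed as a point of `ℝ^(n×n)`. -/
def matToFun {n : ℕ} (A : Matrix (Fin n) (Fin n) ℝ) : Fin n × Fin n → ℝ :=
  fun p => A p.1 p.2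

/-- A point of `ℝ^(n×n)` viewed as a matrix. -/
def funToMat {n : ℕ} (x : Fin n × Fin n → ℝ) : Matrix (Fin n) (Fin n) ℝ :=
  Matrix.of fun i j => x (i, j)

/-- The componentwise condition number `c^det(A)` of determinant computation at `A`. -/
noncomputable def cDet {n : ℕ} (A : Matrix (Fin n) (Fin n) ℝ) : ℝ≥0∞ :=
  cwCond Set.univ (fun x (_ : Unit) => (funToMat x).det) (matToFun A)

/-- The componentwise condition number `c†_{kl}(A)` of the map `A ↦ (A⁻¹)_{kl}` at `A`. -/
noncomputable def cInv {n : ℕ} (k l : Fin n) (A : Matrix (Fin n) (Fin n) ℝ) : ℝ≥0∞ :=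
  cwCond {x | IsUnit (funToMat x).det}
    (fun x (_ : Unit) => (funToMat x)⁻¹ k l) (matToFun A)

/-- `c†(A) = max_{k,l} c†_{kl}(A)`. -/
noncomputable def cInvMax {n : ℕ} (A : Matrix (Fin n) (Fin n) ℝ) : ℝ≥0∞ :=
  ⨆ k, ⨆ l, cInv k l A

/-- A pair (matrix, right-hand side) viewed as a point of `ℝ^(n×n+n)`. -/
def pairToFun {n : ℕ} (A : Matrix (Fin n) (Fin n) ℝ) (b : Fin n → ℝ) :
    (Fin n × Fin n) ⊕ Fin n → ℝ :=
  Sum.elim (fun p => A p.1 p.2) b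

def funToMat' {n : ℕ} (x : (Fin n × Fin n) ⊕ Fin n → ℝ) : Matrix (Fin n) (Fin n) ℝ :=
  Matrix.of fun i j => x (Sum.inl (i, j))

def funToVec {n : ℕ} (x : (Fin n × Fin n) ⊕ Fin n → ℝ) : Fin n → ℝ :=
  fun i => x (Sum.inr i)

/-- The componentwise condition number `c_k(A,b)` of the map `(A,b) ↦ (A⁻¹b)_k` at `(A,b)`. -/
noncomputable def cLin {n : ℕ} (k : Fin n) (A : Matrix (Fin n) (Fin n) ℝ)
    (b : Fin n → ℝ) : ℝ≥0∞ :=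
  cwCond {x | IsUnit (funToMat' x).det}
    (fun x (_ : Unit) => (Matrix.mulVec (funToMat' x)⁻¹ (funToVec x)) k) (pairToFun A b)

/-- `c(A,b) = max_k c_k(A,b)`. -/
noncomputable def cLinMax {n : ℕ} (A : Matrix (Fin n) (Fin n) ℝ) (b : Fin n → ℝ) : ℝ≥0∞ :=
  ⨆ k, cLin k A b

instance matrixMeasurableSpace {n : ℕ} : MeasurableSpace (Matrix (Fin n) (Fin n) ℝ) :=
  inferInstanceAs (MeasurableSpace (Fin n → Fin n → ℝ))

/-- The distribution `N_S(Ā, σ²Id)` of a random sparse matrix: the entries `a_{ij}` with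
`(i,j) ∈ S` are independent Gaussians `N(ā_{ij}, σ²)`, and `a_{ij} = 0` for `(i,j) ∉ S`. -/
noncomputable def sparseGaussian {n : ℕ} (S : Finset (Fin n × Fin n))
    (Abar : Matrix (Fin n) (Fin n) ℝ) (σ : ℝ) : Measure (Matrix (Fin n) (Fin n) ℝ) :=
  (Measure.pi fun p : S => gaussianReal (Abar p.1.1 p.1.2) ⟨σ ^ 2, sq_nonneg σ⟩).map
    fun g => Matrix.of fun i j => if h : (i, j) ∈ S then g ⟨(i, j), h⟩ else 0

/-- The distribution `N(b̄, σ²Id)` on `ℝⁿ`: independent Gaussian entries `N(b̄_i, σ²)`. -/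
noncomputable def vecGaussian {n : ℕ} (bbar : Fin n → ℝ) (σ : ℝ) : Measure (Fin n → ℝ) :=
  Measure.pi fun i => gaussianReal (bbar i) ⟨σ ^ 2, sq_nonneg σ⟩

/-- `S ⊆ [n]²` is admissible when `M_S` contains an invertible matrix. -/
def Admissible {n : ℕ} (S : Finset (Fin n × Fin n)) : Prop :=
  ∃ B : Matrix (Fin n) (Fin n) ℝ, (∀ i j, (i, j) ∉ S → B i j = 0) ∧ IsUnit B.det

/-- The lower-triangular sparsity pattern `{(i,j) ∈ [n]² : i ≥ j}`. -/
def triPattern (n : ℕ) : Finset (Fin n × Fin n) :=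
  Finset.univ.filter fun p => p.2 ≤ p.1

/-! ### One coordinate at a time -/

lemma pi_le_of_section {ι : Type*} [Fintype ι] [DecidableEq ι] (μ : ι → Measure ℝ)
    [∀ i, IsProbabilityMeasure (μ i)] (i : ι) {A : Set (ι → ℝ)} (hA : MeasurableSet A)
    (c : ℝ≥0∞) (h : ∀ g : ι → ℝ, μ i {t | Function.update g i t ∈ A} ≤ c) :
    Measure.pi μ A ≤ c := by
  rw [← lintegral_indicator_one hA, lintegral_eq_lmarginal_univ (fun _ => 0),
    lmarginal_erase' _ (measurable_one.indicator hA) (Finset.mem_univ i)]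
  have h1 : (fun x : ι → ℝ => ∫⁻ t, A.indicator (1 : (ι → ℝ) → ℝ≥0∞) (Function.update x i t) ∂μ i)
      ≤ fun _ => c := by
    intro g
    refine le_trans (le_of_eq ?_) (h g)
    have hm : MeasurableSet {t : ℝ | Function.update g i t ∈ A} := (measurable_update g) hA
    rw [← lintegral_indicator_one hm]
    rfl
  refine le_trans (lmarginal_mono h1 _) ?_
  simp [lmarginal]

lemma gauss_apply_le (m σ : ℝ) (v : NNReal) (hvσ : (v : ℝ) = σ ^ 2) (hσ : 0 < σ) (hm : |m| ≤ 1) (h t : ℝ) (ht : 0 < t) :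
    gaussianReal m v {l | t ≤ |l| / |l - h|}
      ≤ ENNReal.ofReal (2 * ((1 + σ) / σ) / t) := by
  have hs : 1 ≤ (1 + σ) / σ := by rw [le_div_iff₀ hσ]; linarith
  by_cases ht2 : t < 2
  · refine prob_le_one.trans ?_
    rw [ENNReal.one_le_ofReal, le_div_iff₀ ht]
    linarith
  push Not at ht2
  have hv : v ≠ 0 := by
    intro h0
    rw [h0] at hvσ
    have : σ ^ 2 = 0 := by simpa using hvσ.symm
    nlinarith
  by_cases hh : h = 0
  · have : {l : ℝ | t ≤ |l| / |l - h|} = ∅ := by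
      ext l
      simp only [Set.mem_ofPred_eq, Set.mem_empty_iff_false, iff_false, not_le, hh, sub_zero]
      exact lt_of_le_of_lt (div_self_le_one _) (by linarith)
    rw [this]; simp
  have hpos : 0 < |h| := abs_pos.2 hh
  set δ : ℝ := |h| * (t / (t ^ 2 - 1)) with hδ
  have ht1 : 0 < t ^ 2 - 1 := by nlinarith
  -- every point of the set satisfies the two bounds
  have key : ∀ l ∈ {l : ℝ | t ≤ |l| / |l - h|}, |h| * (t / (t + 1)) ≤ |l| ∧
      l ∈ Set.Icc (h * (t ^ 2 / (t ^ 2 - 1)) - δ) (h * (t ^ 2 / (t ^ 2 - 1)) + δ) := by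
    intro l hl
    have hl : t ≤ |l| / |l - h| := hl
    have hne : 0 < |l - h| := by
      rcases (abs_nonneg (l - h)).lt_or_eq with h1 | h1
      · exact h1
      · rw [← h1, div_zero] at hl; linarith
    rw [le_div_iff₀ hne] at hl
    constructor
    · have h2 : |h| ≤ |l| + |l - h| := by
        have := abs_sub_abs_le_abs_sub h l
        rw [abs_sub_comm h l] at this; linarith
      rw [mul_div_assoc', div_le_iff₀ (by linarith)]
      nlinarith
    · have hsq : (t * |l - h|) ^ 2 ≤ |l| ^ 2 := by gcongr
      rw [mul_pow, sq_abs, sq_abs] at hsq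
      have h3 : |l - h * (t ^ 2 / (t ^ 2 - 1))| ≤ δ := by
        apply abs_le_of_sq_le_sq _ (by positivity)
        rw [hδ, mul_pow, sq_abs]
        have e1 : h ^ 2 * (t / (t ^ 2 - 1)) ^ 2 - (l - h * (t ^ 2 / (t ^ 2 - 1))) ^ 2
            = (l ^ 2 - t ^ 2 * (l - h) ^ 2) / (t ^ 2 - 1) := by
          field_simp
          ring
        have e2 : 0 ≤ (l ^ 2 - t ^ 2 * (l - h) ^ 2) / (t ^ 2 - 1) :=
          div_nonneg (by linarith) ht1.le
        linarith
      rw [abs_le] at h3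
      constructor <;> linarith [h3.1, h3.2]
  set M : ℝ := (1 + σ) / σ / 2 / (|h| * (t / (t + 1))) with hM
  have hpdf : ∀ l : ℝ, |h| * (t / (t + 1)) ≤ |l| →
      gaussianPDF m v l ≤ ENNReal.ofReal M := by
    intro l hl
    rw [gaussianPDF]
    apply ENNReal.ofReal_le_ofReal
    have hq : 0 < |h| * (t / (t + 1)) := by positivity
    rw [hM, le_div_iff₀ hq]
    have hg := gaussianPDFReal_nonneg m v l
    refine (mul_le_mul_of_nonneg_left hl hg).trans ?_
    rw [gaussianPDFReal]
    rw [hvσ]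
    obtain ⟨z, hz⟩ : ∃ z, z = |l - m| / σ := ⟨_, rfl⟩
    have hz0 : 0 ≤ z := by rw [hz]; positivity
    have hzl : |l - m| = σ * z := by rw [hz]; field_simp
    have hexp : -(l - m) ^ 2 / (2 * σ ^ 2) = -(z ^ 2 / 2) := by
      rw [hz, div_pow, sq_abs]; field_simp
    have hl1 : |l| ≤ 1 + σ * z := by
      have := abs_sub_abs_le_abs_sub l m
      linarith
    have hE : (1 + σ * z) ≤ (1 + σ) * Real.exp (z ^ 2 / 2) := by
      have h1 := Real.add_one_le_exp (z ^ 2 / 2)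
      have h2 : z ≤ Real.exp (z ^ 2 / 2) := by nlinarith [sq_nonneg (z - 1)]
      have h3 : 1 ≤ Real.exp (z ^ 2 / 2) := by nlinarith [sq_nonneg z]
      nlinarith
    have hroot : 2 * σ ≤ √(2 * Real.pi * σ ^ 2) := by
      apply Real.le_sqrt_of_sq_le
      nlinarith [Real.pi_gt_three, sq_nonneg σ]
    rw [hexp, Real.exp_neg, ← mul_inv, inv_mul_le_iff₀ (by positivity)]
    calc |l| ≤ (1 + σ) * Real.exp (z ^ 2 / 2) := hl1.trans hE
      _ = (2 * σ) * Real.exp (z ^ 2 / 2) * ((1 + σ) / σ / 2) := by field_simp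
      _ ≤ _ := by gcongr
  have hint : gaussianReal m v {l | t ≤ |l| / |l - h|}
      ≤ ENNReal.ofReal M * volume {l : ℝ | t ≤ |l| / |l - h|} := by
    rw [gaussianReal_apply _ hv]
    rw [← setLIntegral_const]
    apply setLIntegral_mono_ae' 
    · apply measurableSet_le <;> fun_prop
    · exact Filter.Eventually.of_forall fun l hl => hpdf l (key l hl).1
  refine hint.trans ?_
  have hvol : volume {l : ℝ | t ≤ |l| / |l - h|} ≤ ENNReal.ofReal (2 * δ) := by
    refine (measure_mono (fun l hl => (key l hl).2)).trans ?_
    rw [Real.volume_Icc]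
    apply ENNReal.ofReal_le_ofReal
    linarith
  refine (mul_le_mul_right hvol _).trans ?_
  rw [← ENNReal.ofReal_mul (by positivity)]
  apply ENNReal.ofReal_le_ofReal
  have e : M * (2 * δ) = (1 + σ) / σ * (1 / (t - 1)) := by
    rw [hM, hδ]
    have : t - 1 ≠ 0 := by linarith
    have e4 : t ^ 2 - 1 = (t - 1) * (t + 1) := by ring
    rw [e4]
    field_simp
  rw [e]
  have : 1 / (t - 1) ≤ 2 / t := by
    rw [div_le_div_iff₀ (by linarith) ht]; linarith
  calc (1 + σ) / σ * (1 / (t - 1)) ≤ (1 + σ) / σ * (2 / t) := by gcongr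
    _ = _ := by ring

lemma gauss_affine_le (m σ : ℝ) (v : NNReal) (hvσ : (v : ℝ) = σ ^ 2) (hσ : 0 < σ) (hm : |m| ≤ 1) (α γ t : ℝ) (ht : 0 < t) :
    gaussianReal m v {l | t ≤ |γ * l| / |α - γ * l|}
      ≤ ENNReal.ofReal (2 * ((1 + σ) / σ) / t) := by
  by_cases hγ : γ = 0
  · have : {l : ℝ | t ≤ |γ * l| / |α - γ * l|} = ∅ := by
      ext l; simp [hγ, ht]
    rw [this]; simp
  · refine le_trans (le_of_eq ?_) (gauss_apply_le m σ v hvσ hσ hm (α / γ) t ht)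
    congr 1
    ext l
    have : α - γ * l = γ * -(l - α / γ) := by field_simp; ring
    simp only [Set.mem_ofPred_eq]
    rw [this, abs_mul, abs_mul, abs_neg, mul_div_mul_left _ _ (abs_ne_zero.2 hγ)]

lemma gauss_null (m σ : ℝ) (v : NNReal) (hvσ : (v : ℝ) = σ ^ 2) (hσ : 0 < σ) (α γ : ℝ) (hγ : γ ≠ 0) :
    gaussianReal m v {l | α + γ * l = 0} ≤ 0 := by
  have hv : v ≠ 0 := by
    intro h0
    rw [h0] at hvσ
    have : σ ^ 2 = 0 := by simpa using hvσ.symm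
    nlinarith
  have := nullSingletonClass_gaussianReal (μ := m) hv
  have e : {l : ℝ | α + γ * l = 0} ⊆ {-α / γ} := by
    intro l hl
    have : α + γ * l = 0 := hl
    simp only [Set.mem_singleton_iff]
    field_simp; linarith
  exact (measure_mono e).trans (by simp)

/-! ### The deterministic bound -/

lemma cwDist_bound {ι : Type*} (u v : ι → ℝ) (h : cwDist u v ≠ ⊤) (i : ι) :
    |u i - v i| ≤ (cwDist u v).toReal * |v i| := by
  have h1 : (if v i ≠ 0 then ENNReal.ofReal (|u i - v i| / |v i|)
       else if u i = v i then 0 else ⊤) ≤ cwDist u v := le_iSup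
        (fun i => if v i ≠ 0 then ENNReal.ofReal (|u i - v i| / |v i|)
          else if u i = v i then 0 else ⊤) i
  by_cases hv : v i = 0
  · by_cases hu : u i = v i
    · simp [hu, hv]
    · simp [hv] at h1
      rw [if_neg (by rwa [hv] at hu)] at h1
      exact absurd (top_le_iff.1 h1) h
  · rw [if_pos hv, ENNReal.ofReal_le_iff_le_toReal h] at h1
    rwa [div_le_iff₀ (abs_pos.2 hv)] at h1

noncomputable def condSum {n : ℕ} (A : Matrix (Fin n) (Fin n) ℝ) (b : Fin n → ℝ) (k : Fin n)
    (y : Fin n → ℝ) : ℝ :=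
  (∑ i, |A⁻¹ k i| * (|b i| + ∑ j, |A i j| * |y j|)) / |(A⁻¹.mulVec b) k|

lemma condSum_nonneg {n : ℕ} (A : Matrix (Fin n) (Fin n) ℝ) (b : Fin n → ℝ) (k : Fin n)
    (y : Fin n → ℝ) : 0 ≤ condSum A b k y := by
  unfold condSum; positivity

lemma perturb_bound {n : ℕ} (A : Matrix (Fin n) (Fin n) ℝ) (b : Fin n → ℝ) (k : Fin n)
    (hA : IsUnit A.det) (A' : Matrix (Fin n) (Fin n) ℝ) (b' : Fin n → ℝ) (hA' : IsUnit A'.det)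
    (d : ℝ) (h1 : ∀ i j, |A' i j - A i j| ≤ d * |A i j|)
    (h2 : ∀ i, |b' i - b i| ≤ d * |b i|) :
    |(A'⁻¹.mulVec b') k - (A⁻¹.mulVec b) k| ≤
      d * ∑ i, |A⁻¹ k i| * (|b i| + ∑ j, |A i j| * |(A'⁻¹.mulVec b') j|) := by
  set x := A'⁻¹.mulVec b' with hx
  have hb' : A'.mulVec x = b' := by
    rw [hx, Matrix.mulVec_mulVec, Matrix.mul_nonsing_inv _ hA', Matrix.one_mulVec]
  have e : x - A⁻¹.mulVec b = A⁻¹.mulVec ((b' - b) - (A' - A).mulVec x) := by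
    rw [Matrix.sub_mulVec, hb']
    have : b' - b - (b' - A.mulVec x) = A.mulVec x - b := by abel
    rw [this, Matrix.mulVec_sub, Matrix.mulVec_mulVec, Matrix.nonsing_inv_mul _ hA,
      Matrix.one_mulVec]
  have e' := congrFun e k
  rw [Pi.sub_apply] at e'
  rw [e', Matrix.mulVec, dotProduct, Finset.mul_sum]
  refine (Finset.abs_sum_le_sum_abs _ _).trans (Finset.sum_le_sum fun i _ => ?_)
  rw [abs_mul, mul_left_comm]
  refine mul_le_mul_of_nonneg_left ?_ (abs_nonneg _)
  rw [Pi.sub_apply, Pi.sub_apply, mul_add, Finset.mul_sum]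
  refine (abs_sub _ _).trans (add_le_add (h2 i) ?_)
  rw [Matrix.mulVec, dotProduct]
  refine (Finset.abs_sum_le_sum_abs _ _).trans (Finset.sum_le_sum fun j _ => ?_)
  rw [abs_mul, ← mul_assoc]
  exact mul_le_mul_of_nonneg_right (h1 i j) (abs_nonneg _)

lemma cLin_le {n : ℕ} (A : Matrix (Fin n) (Fin n) ℝ) (b : Fin n → ℝ) (k : Fin n)
    (hA : IsUnit A.det) (hk : (A⁻¹.mulVec b) k ≠ 0) :
    cLin k A b ≤ ENNReal.ofReal (condSum A b k (A⁻¹.mulVec b)) := by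
  set a := pairToFun A b with ha
  have hfa : funToMat' a = A := rfl
  have hga : funToVec a = b := rfl
  let X : ((Fin n × Fin n) ⊕ Fin n → ℝ) → Fin n → ℝ :=
    fun x => (funToMat' x)⁻¹.mulVec (funToVec x)
  have hcM : Continuous (fun x : (Fin n × Fin n) ⊕ Fin n → ℝ => funToMat' x) := by
    apply continuous_pi; intro i; apply continuous_pi; intro j
    exact continuous_apply _
  have hcv : Continuous (fun x : (Fin n × Fin n) ⊕ Fin n → ℝ => funToVec x) := by
    apply continuous_pi; intro i; exact continuous_apply _
  have hX : ContinuousAt X a := by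
    have hXeq : X = fun x => ((funToMat' x).det)⁻¹ •
        ((funToMat' x).adjugate.mulVec (funToVec x)) := by
      funext x
      simp only [X]
      rw [Matrix.inv_def, Matrix.smul_mulVec, Ring.inverse_eq_inv']
    rw [hXeq]
    refine ContinuousAt.fun_smul ?_ ?_
    · exact (hcM.matrix_det.continuousAt).inv₀ (by rw [hfa]; exact hA.ne_zero)
    · exact (hcM.matrix_adjugate.matrix_mulVec hcv).continuousAt
  have hΦ : ContinuousAt (fun x => condSum A b k (X x)) a := by
    have : Continuous (fun y => condSum A b k y) := by
      unfold condSum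
      fun_prop
    exact this.continuousAt.comp hX
  apply le_of_forall_gt
  intro c hc
  obtain ⟨r, hr1, hr2⟩ := ENNReal.lt_iff_exists_nnreal_btwn.1 hc
  have hr1' : condSum A b k (X a) < r := by
    rw [ENNReal.ofReal_lt_iff_lt_toReal (condSum_nonneg _ _ _ _) (by simp)] at hr1
    exact hr1
  have hev := hΦ.eventually_lt continuousAt_const hr1'
  obtain ⟨ε, hε, hball⟩ := Metric.eventually_nhds_iff.1 hev
  -- choose δ
  obtain ⟨B, hB0, hB⟩ : ∃ B : ℝ, 0 < B ∧ ∀ i, |a i| ≤ B := by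
    refine ⟨‖a‖ + 1, by positivity, fun i => ?_⟩
    have := norm_le_pi_norm a i
    rw [Real.norm_eq_abs] at this; linarith
  refine lt_of_le_of_lt ?_ hr2
  unfold cLin cwCond
  refine iInf₂_le_of_le (ENNReal.ofReal (ε / (2 * B))) ?_ ?_
  · simp only [Set.mem_Ioi, ENNReal.ofReal_pos]; positivity
  refine iSup₂_le fun x hx => ?_
  obtain ⟨hxD, hxd, -⟩ := hx
  have htop : cwDist x a ≠ ⊤ := ne_top_of_le_ne_top ENNReal.ofReal_ne_top hxd
  have hbd := cwDist_bound x a htop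
  have hd : (cwDist x a).toReal ≤ ε / (2 * B) :=
    ENNReal.toReal_le_of_le_ofReal (by positivity) hxd
  have hdist : dist x a < ε := by
    rw [dist_pi_lt_iff hε]
    intro i
    rw [Real.dist_eq]
    calc |x i - a i| ≤ (cwDist x a).toReal * |a i| := hbd i
      _ ≤ ε / (2 * B) * B := mul_le_mul hd (hB i) (abs_nonneg _) (by positivity)
      _ = ε / 2 := by field_simp
      _ < ε := by linarith
  have hlt := hball hdist
  apply ENNReal.div_le_of_le_mul
  have hp := perturb_bound A b k hA (funToMat' x) (funToVec x) hxD (cwDist x a).toReal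
    (fun i j => hbd (Sum.inl (i, j))) (fun i => hbd (Sum.inr i))
  unfold cwDist
  refine iSup_le fun _ => ?_
  change (if (A⁻¹.mulVec b) k ≠ 0 then _ else _) ≤ _
  rw [if_pos hk]
  change _ ≤ _ * cwDist x a
  rw [← ENNReal.ofReal_toReal htop, ← ENNReal.ofReal_coe_nnreal,
    ← ENNReal.ofReal_mul (by positivity)]
  apply ENNReal.ofReal_le_ofReal
  change |((funToMat' x)⁻¹.mulVec (funToVec x)) k - (A⁻¹.mulVec b) k| / |(A⁻¹.mulVec b) k| ≤ _
  rw [div_le_iff₀ (abs_pos.2 hk)]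
  refine hp.trans ?_
  have hl2 : (∑ i, |A⁻¹ k i| * (|b i| + ∑ j, |A i j| * |X x j|)) ≤
      r * |(A⁻¹.mulVec b) k| := by
    have := hlt.le
    unfold condSum at this
    rwa [div_le_iff₀ (abs_pos.2 hk)] at this
  calc _ ≤ (cwDist x a).toReal * (r * |(A⁻¹.mulVec b) k|) :=
        mul_le_mul_of_nonneg_left hl2 ENNReal.toReal_nonneg
    _ = _ := by ring

/-- lower triangular with nonzero diagonal -/
def Good {n : ℕ} (A : Matrix (Fin n) (Fin n) ℝ) : Prop :=
  (∀ i j, i < j → A i j = 0) ∧ ∀ i, A i i ≠ 0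

lemma Good.isUnit {n : ℕ} {A : Matrix (Fin n) (Fin n) ℝ} (h : Good A) : IsUnit A.det := by
  have hT : A.IsLowerTriangular := fun i j hij => h.1 i j hij
  rw [Matrix.det_of_isLowerTriangular A hT, isUnit_iff_ne_zero]
  exact Finset.prod_ne_zero_iff.2 fun i _ => h.2 i

lemma Good.inv_zero {n : ℕ} {A : Matrix (Fin n) (Fin n) ℝ} (h : Good A) (i j : Fin n)
    (hij : i < j) : A⁻¹ i j = 0 := by
  have hT : A.IsLowerTriangular := fun i j hij => h.1 i j hij
  have := A.invertibleOfIsUnitDet h.isUnit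
  exact Matrix.blockTriangular_inv_of_blockTriangular hT hij

/-- the independent contributions to `b i`. -/
noncomputable def yy {n : ℕ} (A : Matrix (Fin n) (Fin n) ℝ) (b : Fin n → ℝ) (i j : Fin n) : ℝ :=
  if j < i then A i j * (A⁻¹.mulVec b) j else if j = i then b i else 0

noncomputable def TT {n : ℕ} (A : Matrix (Fin n) (Fin n) ℝ) (b : Fin n → ℝ)
    (k i j : Fin n) : ℝ :=
  |A⁻¹ k i * yy A b i j| / |(A⁻¹.mulVec b) k|

lemma condSum_le {n : ℕ} {A : Matrix (Fin n) (Fin n) ℝ} (h : Good A) (b : Fin n → ℝ)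
    (k : Fin n) : condSum A b k (A⁻¹.mulVec b) ≤ 2 * ∑ i, ∑ j, TT A b k i j := by
  set x := A⁻¹.mulVec b with hx
  have hb : A.mulVec x = b := by
    rw [hx, Matrix.mulVec_mulVec, Matrix.mul_nonsing_inv _ h.isUnit, Matrix.one_mulVec]
  have row : ∀ i, |b i| + ∑ j, |A i j| * |x j| ≤ 2 * ∑ j, |yy A b i j| := by
    intro i
    have hbi : b i = ∑ j, A i j * x j := by
      conv_lhs => rw [← hb]
      rfl
    have s1 : ∑ j, |yy A b i j| = |b i| + ∑ j ∈ Finset.univ.erase i, |yy A b i j| := by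
      rw [← Finset.add_sum_erase _ _ (Finset.mem_univ i)]
      simp [yy]
    have s2 : ∑ j ∈ Finset.univ.erase i, |yy A b i j|
        = ∑ j ∈ Finset.univ.erase i, |A i j * x j| := by
      refine Finset.sum_congr rfl fun j hj => ?_
      have hne := Finset.ne_of_mem_erase hj
      unfold yy
      split_ifs with h1
      · rfl
      · have : i < j := lt_of_le_of_ne (not_lt.1 h1) (Ne.symm hne)
        simp [h.1 i j this]
    have s3 : ∑ j, |A i j| * |x j| = |A i i * x i| +
        ∑ j ∈ Finset.univ.erase i, |A i j * x j| := by
      rw [← Finset.add_sum_erase _ _ (Finset.mem_univ i)]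
      simp [abs_mul]
    have s4 : |A i i * x i| ≤ |b i| + ∑ j ∈ Finset.univ.erase i, |A i j * x j| := by
      have e : A i i * x i = b i - ∑ j ∈ Finset.univ.erase i, A i j * x j := by
        rw [hbi, ← Finset.add_sum_erase _ _ (Finset.mem_univ i)]; ring
      rw [e]
      exact (abs_sub _ _).trans (add_le_add le_rfl (Finset.abs_sum_le_sum_abs _ _))
    rw [s1, s2, s3]
    linarith
  have e : ∑ i, ∑ j, TT A b k i j = (∑ i, |A⁻¹ k i| * ∑ j, |yy A b i j|) / |x k| := by
    simp only [TT, Finset.sum_div, Finset.mul_sum, abs_mul, ← hx]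
  rw [e, condSum, ← mul_div_assoc, Finset.mul_sum, ← hx]
  apply div_le_div_of_nonneg_right _ (abs_nonneg _)
  refine Finset.sum_le_sum fun i _ => ?_
  rw [mul_left_comm]
  exact mul_le_mul_of_nonneg_left (row i) (abs_nonneg _)

lemma cLinMax_le {n : ℕ} {A : Matrix (Fin n) (Fin n) ℝ} (h : Good A) (b : Fin n → ℝ)
    (hk : ∀ k, (A⁻¹.mulVec b) k ≠ 0) (τ : ℝ) (hT : ∀ k i j, TT A b k i j ≤ τ) :
    cLinMax A b ≤ ENNReal.ofReal (2 * n ^ 2 * τ) := by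
  refine iSup_le fun k => (cLin_le A b k h.isUnit (hk k)).trans ?_
  apply ENNReal.ofReal_le_ofReal
  refine (condSum_le h b k).trans ?_
  have : ∑ i, ∑ j, TT A b k i j ≤ ∑ i : Fin n, ∑ j : Fin n, τ :=
    Finset.sum_le_sum fun i _ => Finset.sum_le_sum fun j _ => hT k i j
  simp only [Finset.sum_const, Finset.card_univ, Fintype.card_fin, nsmul_eq_mul] at this
  nlinarith

/-- dependence on a strictly lower entry -/
lemma inv_update {n : ℕ} {A : Matrix (Fin n) (Fin n) ℝ} (h : Good A) (i j : Fin n)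
    (hij : j < i) (t : ℝ) (a c : Fin n) :
    (A + Matrix.single i j t)⁻¹ a c = A⁻¹ a c - t * (A⁻¹ a i * A⁻¹ j c) := by
  have key : (A + Matrix.single i j t) * (A⁻¹ - A⁻¹ * Matrix.single i j t * A⁻¹) = 1 := by
    have hz : Matrix.single i j t * A⁻¹ * Matrix.single i j t = 0 := by
      rw [Matrix.single_mul_mul_single, h.inv_zero j i hij]; simp
    have h1 := Matrix.mul_nonsing_inv _ h.isUnit
    calc _ = A * A⁻¹ - A * A⁻¹ * Matrix.single i j t * A⁻¹ + Matrix.single i j t * A⁻¹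
          - (Matrix.single i j t * A⁻¹ * Matrix.single i j t) * A⁻¹ := by noncomm_ring
      _ = 1 := by rw [hz, h1]; simp
  rw [Matrix.inv_eq_right_inv key, Matrix.sub_apply]
  congr 1
  rw [Matrix.mul_assoc, Matrix.mul_apply, Finset.sum_eq_single i]
  · rw [Matrix.single_mul_apply_same]; ring
  · intro d _ hd
    rw [Matrix.single_mul_apply_of_ne _ _ _ _ _ hd]; simp
  · simp

lemma TT_update_mat {n : ℕ} {A : Matrix (Fin n) (Fin n) ℝ} (h : Good A) (b : Fin n → ℝ)
    (k i j : Fin n) (hij : j < i) (h0 : A i j = 0) (t : ℝ) :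
    TT (A + Matrix.single i j t) b k i j =
      |(A⁻¹ k i * (A⁻¹.mulVec b) j) * t| /
        |(A⁻¹.mulVec b) k - (A⁻¹ k i * (A⁻¹.mulVec b) j) * t| := by
  have hx : ∀ a, ((A + Matrix.single i j t)⁻¹.mulVec b) a =
      (A⁻¹.mulVec b) a - t * (A⁻¹ a i * (A⁻¹.mulVec b) j) := by
    intro a
    simp only [Matrix.mulVec, dotProduct, inv_update h i j hij]
    rw [Finset.mul_sum, Finset.mul_sum, ← Finset.sum_sub_distrib]
    exact Finset.sum_congr rfl fun c _ => by ring
  unfold TT yy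
  rw [if_pos hij, hx, hx, inv_update h i j hij, h.inv_zero j i hij, Matrix.add_apply, h0,
    Matrix.single_apply_same]
  congr 1 <;> congr 1 <;> ring

lemma mulVec_update {n : ℕ} (A : Matrix (Fin n) (Fin n) ℝ) (b : Fin n → ℝ) (i k : Fin n) (t : ℝ) :
    (A.mulVec (Function.update b i t)) k =
      (A.mulVec (Function.update b i 0)) k + A k i * t := by
  have : Function.update b i t = Function.update b i 0 + t • Pi.single i 1 := by
    funext j
    by_cases hj : j = i
    · subst hj; simp
    · simp [hj]
  rw [this, Matrix.mulVec_add, Matrix.mulVec_smul]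
  simp [mul_comm]

lemma TT_update_vec {n : ℕ} (A : Matrix (Fin n) (Fin n) ℝ) (b : Fin n → ℝ)
    (k i : Fin n) (t : ℝ) :
    TT A (Function.update b i t) k i i =
      |(-A⁻¹ k i) * t| / |(A⁻¹.mulVec (Function.update b i 0)) k - (-A⁻¹ k i) * t| := by
  unfold TT yy
  rw [mulVec_update A⁻¹ b i k t]
  simp [abs_mul]

/-! ### Probability -/

noncomputable def toMat {n : ℕ} (S : Finset (Fin n × Fin n)) (g : S → ℝ) :
    Matrix (Fin n) (Fin n) ℝ :=
  Matrix.of fun i j => if h : (i, j) ∈ S then g ⟨(i, j), h⟩ else 0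

lemma measurable_toMat {n : ℕ} (S : Finset (Fin n × Fin n)) : Measurable (toMat S) := by
  refine measurable_pi_lambda (δ := Fin n) (X := fun _ => Fin n → ℝ) _ fun i =>
    measurable_pi_lambda _ fun j => ?_
  by_cases h : (i, j) ∈ S
  · simpa [toMat, h] using measurable_pi_apply _
  · simp [toMat, h]

/-- the variance as an `NNReal` -/
noncomputable def vsq (σ : ℝ) : NNReal := ⟨σ ^ 2, sq_nonneg σ⟩

lemma sparse_eq {n : ℕ} (S : Finset (Fin n × Fin n)) (Abar : Matrix (Fin n) (Fin n) ℝ) (σ : ℝ) :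
    sparseGaussian S Abar σ =
      (Measure.pi fun p : S => gaussianReal (Abar p.1.1 p.1.2) (vsq σ)).map (toMat S) := rfl

lemma vec_eq {n : ℕ} (bbar : Fin n → ℝ) (σ : ℝ) :
    vecGaussian bbar σ = Measure.pi fun i => gaussianReal (bbar i) (vsq σ) := rfl

instance sparse_prob {n : ℕ} (S : Finset (Fin n × Fin n)) (Abar : Matrix (Fin n) (Fin n) ℝ)
    (σ : ℝ) : IsProbabilityMeasure (sparseGaussian S Abar σ) := by
  rw [sparse_eq]
  exact Measure.isProbabilityMeasure_map (measurable_toMat S).aemeasurable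

instance vec_prob {n : ℕ} (bbar : Fin n → ℝ) (σ : ℝ) :
    IsProbabilityMeasure (vecGaussian bbar σ) := by
  rw [vec_eq]; infer_instance

lemma sparse_le {n : ℕ} (S : Finset (Fin n × Fin n)) (Abar : Matrix (Fin n) (Fin n) ℝ) (σ : ℝ)
    (bbar : Fin n → ℝ) {A : Set (Matrix (Fin n) (Fin n) ℝ × (Fin n → ℝ))} (hA : MeasurableSet A)
    (p : S) (c : ℝ≥0∞)
    (h : ∀ g b, gaussianReal (Abar p.1.1 p.1.2) (vsq σ)
      {t | (toMat S (Function.update g p t), b) ∈ A} ≤ c) :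
    ((sparseGaussian S Abar σ).prod (vecGaussian bbar σ)) A ≤ c := by
  rw [Measure.prod_apply_symm hA]
  have h1 : ∀ b, sparseGaussian S Abar σ ((fun x => (x, b)) ⁻¹' A) ≤ c := by
    intro b
    have hm : MeasurableSet ((fun x : Matrix (Fin n) (Fin n) ℝ => (x, b)) ⁻¹' A) :=
      measurable_prodMk_right hA
    rw [sparse_eq, Measure.map_apply (measurable_toMat S) hm]
    exact pi_le_of_section (fun p : S => gaussianReal (Abar p.1.1 p.1.2) (vsq σ)) p
      (measurable_toMat S hm) c fun g => h g b
  refine (lintegral_mono h1).trans ?_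
  simp

lemma vec_le {n : ℕ} (S : Finset (Fin n × Fin n)) (Abar : Matrix (Fin n) (Fin n) ℝ) (σ : ℝ)
    (bbar : Fin n → ℝ) {A : Set (Matrix (Fin n) (Fin n) ℝ × (Fin n → ℝ))} (hA : MeasurableSet A)
    (i : Fin n) (c : ℝ≥0∞)
    (h : ∀ L b, gaussianReal (bbar i) (vsq σ) {t | (L, Function.update b i t) ∈ A} ≤ c) :
    ((sparseGaussian S Abar σ).prod (vecGaussian bbar σ)) A ≤ c := by
  rw [Measure.prod_apply hA]
  have h1 : ∀ L, vecGaussian bbar σ (Prod.mk L ⁻¹' A) ≤ c := by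
    intro L
    rw [vec_eq]
    exact pi_le_of_section _ i (measurable_prodMk_left hA) c fun b => h L b
  refine (lintegral_mono h1).trans ?_
  simp

section meas
variable {n : ℕ}

lemma measurable_entry (i j : Fin n) :
    Measurable fun p : Matrix (Fin n) (Fin n) ℝ × (Fin n → ℝ) => p.1 i j :=
  ((measurable_pi_apply j).comp (measurable_pi_apply (X := fun _ => Fin n → ℝ) i)).comp
    measurable_fst

lemma measurable_vec (i : Fin n) :
    Measurable fun p : Matrix (Fin n) (Fin n) ℝ × (Fin n → ℝ) => p.2 i :=
  (measurable_pi_apply i).comp measurable_snd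

lemma measurable_det_of {α : Type*} [MeasurableSpace α] (M : α → Matrix (Fin n) (Fin n) ℝ)
    (h : ∀ i j, Measurable fun x => M x i j) : Measurable fun x => (M x).det := by
  simp only [Matrix.det_apply]
  refine Finset.measurable_sum _ fun s _ => ?_
  exact (Finset.measurable_prod _ fun i _ => h _ _).const_smul _

lemma measurable_inv (i j : Fin n) :
    Measurable fun p : Matrix (Fin n) (Fin n) ℝ × (Fin n → ℝ) => (p.1)⁻¹ i j := by
  simp only [Matrix.inv_def, Ring.inverse_eq_inv', Matrix.smul_apply, smul_eq_mul,
    Matrix.adjugate_apply]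
  refine (measurable_det_of _ measurable_entry).inv.mul (measurable_det_of _ fun a c => ?_)
  by_cases h : a = j
  · subst h; simp
  · simpa [Matrix.updateRow_ne h] using measurable_entry a c

lemma measurable_sol (k : Fin n) :
    Measurable fun p : Matrix (Fin n) (Fin n) ℝ × (Fin n → ℝ) => ((p.1)⁻¹.mulVec p.2) k := by
  simp only [Matrix.mulVec, dotProduct]
  exact Finset.measurable_sum _ fun s _ => (measurable_inv k s).mul (measurable_vec s)

lemma measurable_yy (i j : Fin n) :
    Measurable fun p : Matrix (Fin n) (Fin n) ℝ × (Fin n → ℝ) => yy p.1 p.2 i j := by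
  unfold yy
  split_ifs
  · exact (measurable_entry i j).mul (measurable_sol j)
  · exact measurable_vec i
  · exact measurable_const

lemma measurable_TT (k i j : Fin n) :
    Measurable fun p : Matrix (Fin n) (Fin n) ℝ × (Fin n → ℝ) => TT p.1 p.2 k i j := by
  unfold TT
  have h1 := (measurable_inv k i).mul (measurable_yy i j)
  have h2 := measurable_sol k
  exact (measurable_norm.comp h1).div (measurable_norm.comp h2)

lemma measurableSet_good :
    MeasurableSet {p : Matrix (Fin n) (Fin n) ℝ × (Fin n → ℝ) | Good p.1} := by
  have : {p : Matrix (Fin n) (Fin n) ℝ × (Fin n → ℝ) | Good p.1} =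
      (⋂ i, ⋂ j, ⋂ (_ : i < j), {p | p.1 i j = 0}) ∩ ⋂ i, {p | p.1 i i = 0}ᶜ := by
    ext p; simp [Good]
  rw [this]
  refine MeasurableSet.inter ?_ ?_
  · exact MeasurableSet.iInter fun i => MeasurableSet.iInter fun j => MeasurableSet.iInter fun _ =>
      measurable_entry i j (measurableSet_singleton 0)
  · exact MeasurableSet.iInter fun i => (measurable_entry i i (measurableSet_singleton 0)).compl

end meas

lemma toMat_upper {n : ℕ} (g : triPattern n → ℝ) (i j : Fin n) (h : i < j) :
    toMat (triPattern n) g i j = 0 := by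
  have : (i, j) ∉ triPattern n := by simp [triPattern, h]
  simp [toMat, this]

lemma toMat_update {n : ℕ} (g : triPattern n → ℝ) (p : triPattern n) (t : ℝ) :
    toMat (triPattern n) (Function.update g p t) =
      toMat (triPattern n) (Function.update g p 0) + Matrix.single p.1.1 p.1.2 t := by
  ext i j
  rw [Matrix.add_apply]
  by_cases h : p.1 = (i, j)
  · have h1 : (i, j) ∈ triPattern n := h ▸ p.2
    have h2 : (⟨(i, j), h1⟩ : triPattern n) = p := Subtype.ext h.symm
    simp [toMat, h1, h2, h]
  · have h3 : ¬ (p.1.1 = i ∧ p.1.2 = j) := fun hh => h (Prod.ext hh.1 hh.2)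
    rw [Matrix.single_apply_of_ne _ _ _ _ _ h3, add_zero]
    by_cases h1 : (i, j) ∈ triPattern n
    · have h2 : (⟨(i, j), h1⟩ : triPattern n) ≠ p := fun hh => h (by rw [← hh])
      simp [toMat, h1, h2]
    · simp [toMat, h1]

section prob
variable {n : ℕ} (Lbar : Matrix (Fin n) (Fin n) ℝ) (bbar : Fin n → ℝ) (σ : ℝ)

lemma ae_good (hσ : 0 < σ) :
    ∀ᵐ p ∂((sparseGaussian (triPattern n) Lbar σ).prod (vecGaussian bbar σ)), Good p.1 := by
  have hd : ∀ i : Fin n, ∀ᵐ p ∂((sparseGaussian (triPattern n) Lbar σ).prod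
      (vecGaussian bbar σ)), p.1 i i ≠ 0 := by
    intro i
    rw [ae_iff, ← nonpos_iff_eq_zero]
    have hm : (i, i) ∈ triPattern n := by simp [triPattern]
    refine sparse_le _ _ _ _ ?_ ⟨(i, i), hm⟩ 0 fun g b => ?_
    · simp only [not_not]
      exact measurable_entry i i (measurableSet_singleton 0)
    · refine le_trans (le_of_eq ?_) (gauss_null (Lbar i i) σ (vsq σ) rfl hσ 0 1 one_ne_zero)
      congr 1
      ext t
      simp [toMat, hm]
  have hu : ∀ᵐ p ∂((sparseGaussian (triPattern n) Lbar σ).prod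
      (vecGaussian bbar σ)), ∀ i j, i < j → p.1 i j = 0 := by
    simp only [ae_all_iff]
    intro i j hij
    have hm : (i, i) ∈ triPattern n := by simp [triPattern]
    rw [ae_iff, ← nonpos_iff_eq_zero]
    refine sparse_le _ _ _ _ ?_ ⟨(i, i), hm⟩ 0 fun g b => ?_
    · exact (measurable_entry i j (measurableSet_singleton 0)).compl
    · simp [toMat_upper _ i j hij]
  filter_upwards [hu, ae_all_iff.2 hd] with p h1 h2 using ⟨h1, h2⟩

lemma ae_sol (hσ : 0 < σ) :
    ∀ᵐ p ∂((sparseGaussian (triPattern n) Lbar σ).prod (vecGaussian bbar σ)),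
      ∀ k, ((p.1)⁻¹.mulVec p.2) k ≠ 0 := by
  rw [ae_all_iff]
  intro k
  have h0 : ((sparseGaussian (triPattern n) Lbar σ).prod (vecGaussian bbar σ))
      ({p | Good p.1} ∩ {p | ((p.1)⁻¹.mulVec p.2) k = 0}) ≤ 0 := by
    refine vec_le _ _ _ _ (measurableSet_good.inter
      (measurable_sol k (measurableSet_singleton 0))) k 0 fun L b => ?_
    by_cases hL : Good L
    · have hne : L⁻¹ k k ≠ 0 := by
        intro hz
        have h1 : (L * L⁻¹) k k = 1 := by
          rw [Matrix.mul_nonsing_inv _ hL.isUnit, Matrix.one_apply_eq]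
        rw [Matrix.mul_apply, Finset.sum_eq_zero] at h1
        · exact zero_ne_one h1
        · intro j _
          rcases lt_trichotomy j k with h | h | h
          · rw [hL.inv_zero j k h, mul_zero]
          · rw [h, hz, mul_zero]
          · rw [hL.1 k j h, zero_mul]
      refine le_trans (measure_mono ?_) (gauss_null (bbar k) σ (vsq σ) rfl hσ
        ((L⁻¹.mulVec (Function.update b k 0)) k) _ hne)
      intro t ht
      have := ht.2
      change (L⁻¹.mulVec (Function.update b k t)) k = 0 at this
      rw [mulVec_update] at this
      exact this
    · simp [hL]
  have h1 : ∀ᵐ p ∂((sparseGaussian (triPattern n) Lbar σ).prod (vecGaussian bbar σ)),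
      ¬ (p ∈ ({p | Good p.1} ∩ {p | ((p.1)⁻¹.mulVec p.2) k = 0} :
        Set (Matrix (Fin n) (Fin n) ℝ × (Fin n → ℝ)))) :=
    measure_eq_zero_iff_ae_notMem.1 (nonpos_iff_eq_zero.1 h0)
  filter_upwards [h1, ae_good Lbar bbar σ hσ] with p hp hg hz using hp ⟨hg, hz⟩

lemma tail_TT (hmax : ∀ i j, |Lbar i j| ≤ 1) (hbmax : ∀ i, |bbar i| ≤ 1) (hσ : 0 < σ)
    (k i j : Fin n) (t : ℝ) (ht : 0 < t) :
    ((sparseGaussian (triPattern n) Lbar σ).prod (vecGaussian bbar σ))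
      ({p | Good p.1} ∩ {p | t ≤ TT p.1 p.2 k i j})
      ≤ ENNReal.ofReal (2 * ((1 + σ) / σ) / t) := by
  have hmeas : MeasurableSet ({p | Good p.1} ∩ {p | t ≤ TT p.1 p.2 k i j} :
      Set (Matrix (Fin n) (Fin n) ℝ × (Fin n → ℝ))) :=
    measurableSet_good.inter (measurableSet_le measurable_const (measurable_TT k i j))
  rcases lt_trichotomy j i with h | h | h
  · have hm : (i, j) ∈ triPattern n := by simp [triPattern, h.le]
    refine sparse_le _ _ _ _ hmeas ⟨(i, j), hm⟩ _ fun g b => ?_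
    set L0 := toMat (triPattern n) (Function.update g ⟨(i, j), hm⟩ 0) with hL0
    have hup : ∀ s, toMat (triPattern n) (Function.update g ⟨(i, j), hm⟩ s) =
        L0 + Matrix.single i j s := fun s => toMat_update g ⟨(i, j), hm⟩ s
    have h0 : L0 i j = 0 := by simp [hL0, toMat, hm]
    by_cases hG : Good L0
    · refine le_trans (measure_mono ?_) (gauss_affine_le (Lbar i j) σ (vsq σ) rfl hσ (hmax i j)
        ((L0⁻¹.mulVec b) k) (L0⁻¹ k i * (L0⁻¹.mulVec b) j) t ht)
      intro s hs
      have := hs.2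
      change t ≤ TT (toMat (triPattern n) (Function.update g ⟨(i, j), hm⟩ s)) b k i j at this
      rw [hup, TT_update_mat hG b k i j h h0] at this
      exact this
    · refine le_trans (le_of_eq ?_) zero_le
      have : {s | (toMat (triPattern n) (Function.update g ⟨(i, j), hm⟩ s), b) ∈
          ({p | Good p.1} ∩ {p | t ≤ TT p.1 p.2 k i j} :
      Set (Matrix (Fin n) (Fin n) ℝ × (Fin n → ℝ)))} = ∅ := by
        ext s
        simp only [Set.mem_empty_iff_false, iff_false]
        rintro ⟨hs, -⟩
        change Good (toMat (triPattern n) (Function.update g ⟨(i, j), hm⟩ s)) at hs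
        apply hG
        refine ⟨fun a c hac => toMat_upper _ _ _ hac, fun a => ?_⟩
        have := hs.2 a
        rw [hup, Matrix.add_apply, Matrix.single_apply_of_ne _ _ _ _ _ (by
          rintro ⟨rfl, rfl⟩; exact lt_irrefl _ h), add_zero] at this
        exact this
      rw [this]; simp
  · subst h
    refine vec_le _ _ _ _ hmeas j _ fun L b => ?_
    refine le_trans (measure_mono ?_) (gauss_affine_le (bbar j) σ (vsq σ) rfl hσ (hbmax j)
        ((L⁻¹.mulVec (Function.update b j 0)) k) (-L⁻¹ k j) t ht)
    intro s hs
    have := hs.2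
    change t ≤ TT L (Function.update b j s) k j j at this
    rw [TT_update_vec] at this
    exact this
  · refine le_trans (le_of_eq ?_) zero_le
    have : ({p | Good p.1} ∩ {p | t ≤ TT p.1 p.2 k i j} :
      Set (Matrix (Fin n) (Fin n) ℝ × (Fin n → ℝ))) = ∅ := by
      ext p
      simp [TT, yy, h.not_gt, h.ne', ht]
    rw [this]; simp

lemma tail_max (hmax : ∀ i j, |Lbar i j| ≤ 1) (hbmax : ∀ i, |bbar i| ≤ 1) (hσ : 0 < σ)
    (τ : ℝ) (ht : 0 < τ) :
    ((sparseGaussian (triPattern n) Lbar σ).prod (vecGaussian bbar σ))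
      {p | 2 * n ^ 2 * τ < (cLinMax p.1 p.2).toReal}
      ≤ ENNReal.ofReal (n ^ 3 * (2 * ((1 + σ) / σ) / τ)) := by
  set μ := (sparseGaussian (triPattern n) Lbar σ).prod (vecGaussian bbar σ) with hμ
  have h1 : μ {p | 2 * n ^ 2 * τ < (cLinMax p.1 p.2).toReal} ≤
      μ (⋃ q : Fin n × Fin n × Fin n,
        ({p | Good p.1} ∩ {p | τ ≤ TT p.1 p.2 q.1 q.2.1 q.2.2})) := by
    apply measure_mono_ae
    filter_upwards [ae_good Lbar bbar σ hσ, ae_sol Lbar bbar σ hσ] with p hg hs hp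
    by_contra hcon
    have hcon' : ∀ k i j, TT p.1 p.2 k i j ≤ τ := by
      intro k i j
      by_contra hlt
      push Not at hlt
      exact hcon (Set.mem_iUnion.2 ⟨(k, i, j), hg, hlt.le⟩)
    have := ENNReal.toReal_le_of_le_ofReal (by positivity) (cLinMax_le hg p.2 hs τ hcon')
    exact absurd this (not_le.2 hp)
  refine h1.trans ((measure_iUnion_le _).trans ?_)
  rw [tsum_fintype]
  refine (Finset.sum_le_sum fun q _ =>
    tail_TT Lbar bbar σ hmax hbmax hσ q.1 q.2.1 q.2.2 τ ht).trans ?_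
  rw [Finset.sum_const, nsmul_eq_mul, ENNReal.ofReal_mul (by positivity)]
  gcongr
  simp only [Finset.card_univ, Fintype.card_prod, Fintype.card_fin]
  rw [← ENNReal.ofReal_natCast]
  apply ENNReal.ofReal_le_ofReal
  push_cast
  apply le_of_eq; ring

lemma log_bound (hn : 0 < n) (hmax : ∀ i j, |Lbar i j| ≤ 1) (hbmax : ∀ i, |bbar i| ≤ 1)
    (hσ : 0 < σ) :
    ∫ p, Real.log (cLinMax p.1 p.2).toReal
        ∂((sparseGaussian (triPattern n) Lbar σ).prod (vecGaussian bbar σ))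
      ≤ Real.log (4 * n ^ 5 * ((1 + σ) / σ)) + 1 := by
  set μ := (sparseGaussian (triPattern n) Lbar σ).prod (vecGaussian bbar σ) with hμ
  have hs : 1 ≤ (1 + σ) / σ := by rw [le_div_iff₀ hσ]; linarith
  have hn1 : (1 : ℝ) ≤ n := by exact_mod_cast hn
  set a : ℝ := 4 * n ^ 5 * ((1 + σ) / σ) with ha
  have ha1 : 1 ≤ a := by
    have h5 : (1 : ℝ) ≤ n ^ 5 := one_le_pow₀ hn1
    nlinarith
  have hla : 0 ≤ Real.log a := Real.log_nonneg ha1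
  by_cases hint : Integrable (fun p => Real.log (cLinMax p.1 p.2).toReal) μ
  swap
  · rw [integral_undef hint]; linarith
  set f : Matrix (Fin n) (Fin n) ℝ × (Fin n → ℝ) → ℝ :=
    fun p => Real.log (cLinMax p.1 p.2).toReal with hf
  let F := fun p => max (f p - Real.log a) 0
  have hF : Integrable F μ := (hint.sub (integrable_const _)).pos_part
  have hle : ∫ p, f p ∂μ ≤ ∫ p, (Real.log a + F p) ∂μ := by
    refine integral_mono hint ((integrable_const _).add hF) fun p => ?_
    have : f p - Real.log a ≤ F p := le_max_left _ _
    linarith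
  rw [integral_add (integrable_const _) hF] at hle
  simp only [integral_const, probReal_univ, one_smul] at hle
  refine hle.trans (add_le_add le_rfl ?_)
  have hF0 : 0 ≤ F := fun p => le_max_right _ _
  rw [integral_eq_lintegral_of_nonneg_ae (Filter.Eventually.of_forall hF0)
    hF.aestronglyMeasurable]
  apply ENNReal.toReal_le_of_le_ofReal zero_le_one
  rw [lintegral_eq_lintegral_meas_lt μ (Filter.Eventually.of_forall hF0) hF.aemeasurable]
  have htail : ∀ u ∈ Set.Ioi (0 : ℝ), μ {p | u < F p} ≤ ENNReal.ofReal (Real.exp (-u)) := by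
    intro u hu
    have hu : 0 < u := hu
    have hτ : 0 < 2 * n ^ 3 * ((1 + σ) / σ) * Real.exp u := by positivity
    refine le_trans (measure_mono ?_) ((tail_max Lbar bbar σ hmax hbmax hσ _ hτ).trans
      (le_of_eq ?_))
    · intro p hp
      have hp : u < max (f p - Real.log a) 0 := hp
      have h1 : u < f p - Real.log a := by
        rcases lt_max_iff.1 hp with h | h
        · exact h
        · exact absurd h (not_lt.2 hu.le)
      change 2 * n ^ 2 * (2 * n ^ 3 * ((1 + σ) / σ) * Real.exp u) < (cLinMax p.1 p.2).toReal
      have e : 2 * n ^ 2 * (2 * n ^ 3 * ((1 + σ) / σ) * Real.exp u)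
          = Real.exp (Real.log a + u) := by
        rw [Real.exp_add, Real.exp_log (by linarith), ha]; ring
      rw [e]
      have hc0 : 0 < (cLinMax p.1 p.2).toReal := by
        rcases ENNReal.toReal_nonneg.lt_or_eq with h | h
        · exact h
        · exfalso
          simp only [hf] at h1
          rw [← h, Real.log_zero] at h1
          linarith
      rw [← Real.lt_log_iff_exp_lt hc0]
      simp only [hf] at h1
      linarith
    · congr 1
      rw [Real.exp_neg]
      have : (n : ℝ) ≠ 0 := by linarith
      field_simp
  refine (setLIntegral_mono' measurableSet_Ioi htail).trans ?_
  rw [← ofReal_integral_eq_lintegral_ofReal, integral_exp_neg_Ioi_zero]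
  · exact integrableOn_exp_neg_Ioi 0
  · exact Filter.Eventually.of_forall fun _ => (Real.exp_pos _).le

end prob

/-- Let `L̄` be lower triangular with `‖L̄‖_max ≤ 1`, `b̄ ∈ ℝⁿ` with
`‖b̄‖_∞ ≤ 1`, `σ > 0`, and let `L ~ N_T(L̄, σ²Id)` and `b ~ N(b̄, σ²Id)` be independent.
Then for every `β > 1`,
`E(log_β(c(L,b))) ≤ log_β((1+σ)/σ) + 5·log_β n + 2.65/ln β`,
where `c(L,b) = max_k c_k(L,b)`. -/
theorem expectation_log_cLinMax_triangular_le {n : ℕ}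
    (Lbar : Matrix (Fin n) (Fin n) ℝ) (htri : ∀ i j : Fin n, i < j → Lbar i j = 0)
    (hmax : ∀ i j, |Lbar i j| ≤ 1) (bbar : Fin n → ℝ) (hbmax : ∀ i, |bbar i| ≤ 1)
    (σ : ℝ) (hσ : 0 < σ) (β : ℝ) (hβ : 1 < β) :
    ∫ p, Real.log (cLinMax p.1 p.2).toReal / Real.log β
        ∂((sparseGaussian (triPattern n) Lbar σ).prod (vecGaussian bbar σ))
      ≤ Real.log ((1 + σ) / σ) / Real.log β + 5 * (Real.log n / Real.log β)
          + 2.65 / Real.log β := by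
  have hlβ : 0 < Real.log β := Real.log_pos hβ
  have hs : 1 ≤ (1 + σ) / σ := by rw [le_div_iff₀ hσ]; linarith
  have hls : 0 ≤ Real.log ((1 + σ) / σ) := Real.log_nonneg hs
  rw [integral_div, ← mul_div_assoc, ← add_div, ← add_div]
  apply div_le_div_of_nonneg_right _ hlβ.le
  rcases Nat.eq_zero_or_pos n with hn | hn
  · subst hn
    simp only [cLinMax, iSup_of_empty]
    simp
    linarith
  · refine (log_bound Lbar bbar σ hn hmax hbmax hσ).trans ?_
    have hn1 : (0 : ℝ) < n := by exact_mod_cast hn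
    rw [Real.log_mul (by positivity) (by positivity), Real.log_mul (by norm_num) (by positivity),
      Real.log_pow]
    have h4 : Real.log 4 = 2 * Real.log 2 := by
      rw [show (4 : ℝ) = 2 ^ 2 by norm_num, Real.log_pow]; norm_num
    have := Real.log_two_lt_d9
    push_cast
    rw [h4]
    norm_num at this ⊢
    linarith
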